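/- (Uniform comparison with the fractional Laplacian, Hölder case.) Let 0<α≤1 and 0<s<1 with 2s<α. Let U:ℝ→ℝ be bounded with [U]_{C^{0,α}} := sup_{x≠y}|U(x)−U(y)|/|x−y|^α < ∞. Then there is a constant C>0 depending only on s and α (independent of h and U) such that for every h>0, sup_{j∈ℤ} |(-Δ_h)^s(r_hU)_j − (-Δ)^sU(hj)| ≤ C·[U]_{C^{0,α}}·h^{α−2s}. -/

import Mathlib

open MeasureTheory

/-- The normalizing constant `A_s = 4^s Γ(1/2+s)/(√π |Γ(-s)|)`, with `|Γ(-s)| = Γ(1-s)/s`. -/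
noncomputable def As (s : ℝ) : ℝ :=
  (4 : ℝ) ^ s * Real.Gamma (1/2 + s) / (Real.sqrt Real.pi * (Real.Gamma (1 - s) / s))

/-- The kernel of the fractional discrete Laplacian on the mesh of size `h`. -/
noncomputable def Ksh (h s : ℝ) (m : ℤ) : ℝ :=
  if m = 0 then 0 else
    As s * (Real.Gamma (|(m : ℝ)| - s) / (h ^ (2 * s) * Real.Gamma (|(m : ℝ)| + 1 + s)))

/-- The fractional discrete Laplacian `(-Δ_h)^s u_j = Σ_{m ≠ j} (u_j - u_m) K_s^h(j-m)`. -/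
noncomputable def fracLap (h s : ℝ) (u : ℤ → ℝ) (j : ℤ) : ℝ :=
  ∑' m : ℤ, (u j - u m) * Ksh h s (j - m)

/-- The continuous fractional Laplacian `(-Δ)^s U(x) = A_s ∫_ℝ (U(x)-U(y))/|x-y|^{1+2s} dy`. -/
noncomputable def cFracLap (s : ℝ) (U : ℝ → ℝ) (x : ℝ) : ℝ :=
  As s * ∫ y : ℝ, (U x - U y) / |x - y| ^ (1 + 2 * s)

/-!
An affine change of variables turns both operators at `h * j` into `A_s h^{-2s}` times a sum over
`ℤ`, respectively an integral over `ℝ`, of the weighted increment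
`g t = U (h * j) - U (h * j + h * t)`, which vanishes at `0` and has `α`-Hölder constant
`L * h ^ α`. Tile `ℝ` by the unit cells centred at the integers and compare cell by cell. Away
from `0`, log-convexity of `Γ` gives `Γ(x - s) / Γ(x + 1 + s) = x^{-1-2s} (1 + O(1 / x))`. Since
`|g|` grows at most linearly along the integers (here `α ≤ 1`), the error on the cell around `m` is
`O(|m|^{-1-2s})`, which is summable. The cell around `0` contributes at most a multiple of
`∫ |t|^{α-1-2s}`, finite because `2s < α`.
-/

open Set

section General

lemma norm_tsum_sub_integral_le {X E ι : Type*} [MeasurableSpace X] [NormedAddCommGroup E]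
    [NormedSpace ℝ E] [CompleteSpace E] [Countable ι] {μ : Measure X} {S : ι → Set X}
    {f : X → E} {a : ι → E} {b : ι → ℝ} (hS : ∀ i, MeasurableSet (S i))
    (hSd : Pairwise (Function.onFun Disjoint S)) (hSu : ⋃ i, S i = univ) (hf : Integrable f μ)
    (hb : Summable b) (hab : ∀ i, ‖a i - ∫ x in S i, f x ∂μ‖ ≤ b i) :
    ‖∑' i, a i - ∫ x, f x ∂μ‖ ≤ ∑' i, b i := by
  have hint : HasSum (fun i ↦ ∫ x in S i, f x ∂μ) (∫ x, f x ∂μ) := by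
    simpa only [hSu, setIntegral_univ] using hasSum_integral_iUnion hS hSd hf.integrableOn
  have hsub : HasSum (fun i ↦ a i - ∫ x in S i, f x ∂μ) _ :=
    (hb.of_norm_bounded hab).hasSum
  have ha : Summable a := by simpa only [sub_add_cancel] using (hsub.add hint).summable
  rw [← (ha.hasSum.sub hint).tsum_eq]
  exact tsum_of_norm_bounded hb.hasSum hab

lemma holderWith_of_dist_le {X Y : Type*} [PseudoMetricSpace X] [PseudoMetricSpace Y]
    {C r : NNReal} {f : X → Y} (h : ∀ x y, dist (f x) (f y) ≤ C * dist x y ^ (r : ℝ)) :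
    HolderWith C r f := by
  intro x y
  rw [edist_nndist, edist_nndist, ← ENNReal.coe_rpow_of_nonneg _ r.coe_nonneg]
  exact_mod_cast h x y

lemma abs_rpow_neg_sub_rpow_neg_le {a p x y : ℝ} (ha : 0 < a) (hp : 0 ≤ p) (hx : a ≤ x)
    (hy : a ≤ y) : |x ^ (-p) - y ^ (-p)| ≤ p * a ^ (-p - 1) * |x - y| := by
  have hderiv : ∀ z ∈ Ici a,
      HasDerivWithinAt (fun z : ℝ ↦ z ^ (-p)) (-p * z ^ (-p - 1)) (Ici a) z := fun z hz ↦
    (Real.hasDerivAt_rpow_const (Or.inl (ha.trans_le hz).ne')).hasDerivWithinAt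
  refine (convex_Ici a).norm_image_sub_le_of_norm_hasDerivWithin_le hderiv (fun z hz ↦ ?_) hy hx
  have hz0 : 0 < z := ha.trans_le hz
  rw [norm_mul, norm_neg, Real.norm_of_nonneg hp, Real.norm_of_nonneg (by positivity)]
  exact mul_le_mul_of_nonneg_left (Real.rpow_le_rpow_of_nonpos ha hz (by linarith)) hp

lemma rpow_neg_le_of_abs_sub_le_half {p x y : ℝ} (hp : 0 ≤ p) (hx : 1 ≤ x)
    (hxy : |x - y| ≤ 1 / 2) : y ^ (-p) ≤ 2 ^ p * x ^ (-p) := by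
  have hy : x / 2 ≤ y := by linarith [(abs_le.1 hxy).2]
  calc y ^ (-p) ≤ (x / 2) ^ (-p) :=
        Real.rpow_le_rpow_of_nonpos (by linarith) hy (neg_nonpos.2 hp)
    _ = 2 ^ p * x ^ (-p) := by
        rw [Real.div_rpow (by linarith) two_pos.le, Real.rpow_neg two_pos.le, div_inv_eq_mul,
          mul_comm]

lemma abs_rpow_neg_sub_rpow_neg_le_of_abs_sub_le_half {p x y : ℝ} (hp : 0 ≤ p) (hx : 1 ≤ x)
    (hxy : |x - y| ≤ 1 / 2) : |x ^ (-p) - y ^ (-p)| ≤ p * 2 ^ p * (x ^ (-p) / x) := by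
  have hx0 : 0 < x := by linarith
  have hy : x / 2 ≤ y := by linarith [(abs_le.1 hxy).2]
  calc |x ^ (-p) - y ^ (-p)| ≤ p * (x / 2) ^ (-p - 1) * |x - y| :=
        abs_rpow_neg_sub_rpow_neg_le (half_pos hx0) hp (half_le_self hx0.le) hy
    _ ≤ p * (x / 2) ^ (-p - 1) * (1 / 2) := by gcongr
    _ = p * 2 ^ p * (x ^ (-p) / x) := by
        rw [Real.rpow_sub_one (half_pos hx0).ne', Real.div_rpow hx0.le two_pos.le,
          Real.rpow_neg two_pos.le]
        field_simp

lemma locallyIntegrable_abs_rpow {r : ℝ} (hr : -1 < r) :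
    LocallyIntegrable (fun t : ℝ ↦ |t| ^ r) := by
  refine locallyIntegrable_of_norm_le_rpow (C := 1) (α := -r) (by simp) ?_ ?_ ?_
  · rw [Module.finrank_self, Nat.cast_one]
    linarith
  · refine ae_of_all _ fun t ↦ ?_
    rw [neg_neg, one_mul, Real.norm_eq_abs, Real.norm_eq_abs,
      Real.abs_rpow_of_nonneg (abs_nonneg t), abs_abs]
  · exact (by fun_prop : Measurable fun t : ℝ ↦ |t| ^ r).aestronglyMeasurable

lemma abs_div_abs_rpow_le {L α p a t : ℝ} (hL : 0 ≤ L) (hp : p ≠ 0)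
    (h : |a| ≤ L * |t| ^ α) : |a / |t| ^ p| ≤ L * |t| ^ (α - p) := by
  rcases eq_or_ne t 0 with rfl | ht
  · simpa [Real.zero_rpow hp] using mul_nonneg hL (Real.rpow_nonneg le_rfl (α - p))
  · rw [abs_div, abs_of_nonneg (Real.rpow_nonneg (abs_nonneg t) p), Real.rpow_sub (abs_pos.2 ht),
      ← mul_div_assoc]
    gcongr

lemma integrable_div_abs_rpow {α p L M : ℝ} {g : ℝ → ℝ} (hg : Measurable g)
    (hp : 1 < p) (hpα : p < 1 + α) (hL : ∀ t, |g t| ≤ L * |t| ^ α)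
    (hM : ∀ t, |g t| ≤ M) : Integrable (fun t ↦ g t / |t| ^ p) := by
  have hmeas : AEStronglyMeasurable (fun t ↦ g t / |t| ^ p) :=
    (by fun_prop : Measurable fun t ↦ g t / |t| ^ p).aestronglyMeasurable
  have hL0 : 0 ≤ L := by simpa using (abs_nonneg (g 1)).trans (hL 1)
  have hnear : IntegrableOn (fun t ↦ g t / |t| ^ p) (Icc (-1) 1) := by
    have hdom := ((locallyIntegrable_abs_rpow (r := α - p) (by linarith)).integrableOn_isCompact
      (isCompact_Icc (a := -1) (b := 1))).const_mul L
    exact hdom.mono' hmeas.restrict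
      (ae_of_all _ fun t ↦ abs_div_abs_rpow_le hL0 (by linarith) (hL t))
  have hfar : IntegrableOn (fun t ↦ g t / |t| ^ p) (Icc (-1) 1)ᶜ := by
    have hdom : Integrable fun t : ℝ ↦ M * (2 ^ p * (1 + ‖t‖) ^ (-p)) :=
      ((integrable_one_add_norm (by simpa using hp)).const_mul _).const_mul M
    refine hdom.integrableOn.mono' hmeas.restrict
      (ae_restrict_of_forall_mem measurableSet_Icc.compl fun t ht ↦ ?_)
    have ht1 : 1 < |t| := not_le.1 fun h ↦ ht (abs_le.1 h)
    have hpow : (|t| ^ p)⁻¹ ≤ 2 ^ p * (1 + ‖t‖) ^ (-p) := by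
      calc (|t| ^ p)⁻¹ ≤ (((1 + ‖t‖) / 2) ^ p)⁻¹ := by
            gcongr
            rw [Real.norm_eq_abs]
            linarith
        _ = 2 ^ p * (1 + ‖t‖) ^ (-p) := by
            rw [Real.div_rpow (by positivity) two_pos.le, inv_div, Real.rpow_neg (by positivity),
              div_eq_mul_inv]
    rw [Real.norm_eq_abs, abs_div, abs_of_nonneg (Real.rpow_nonneg (abs_nonneg t) p),
      div_eq_mul_inv]
    exact mul_le_mul (hM t) hpow (by positivity) ((abs_nonneg _).trans (hM t))
  rw [← integrableOn_univ, ← union_compl_self (Icc (-1 : ℝ) 1)]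
  exact hnear.union hfar

end General

section Gamma

variable {s x : ℝ}

lemma Gamma_add_le_rpow_mul_Gamma {a : ℝ} (hx : 0 < x) (ha0 : 0 < a) (ha1 : a < 1) :
    Real.Gamma (x + a) ≤ x ^ a * Real.Gamma x := by
  have hG : 0 < Real.Gamma x := Real.Gamma_pos_of_pos hx
  calc Real.Gamma (x + a) = Real.Gamma ((1 - a) * x + a * (x + 1)) := by ring_nf
    _ ≤ Real.Gamma x ^ (1 - a) * Real.Gamma (x + 1) ^ a :=
      Real.Gamma_mul_add_mul_le_rpow_Gamma_mul_rpow_Gamma hx (by linarith) (by linarith) ha0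
        (by ring)
    _ = x ^ a * (Real.Gamma x ^ (1 - a) * Real.Gamma x ^ a) := by
      rw [Real.Gamma_add_one hx.ne', Real.mul_rpow hx.le hG.le]
      ring
    _ = x ^ a * Real.Gamma x := by rw [← Real.rpow_add hG, sub_add_cancel, Real.rpow_one]

/-- The profile of the kernel of the fractional discrete Laplacian, without its normalizing
constant and mesh scaling: `K_s^h(m) = A_s h^{-2s} meshKernel s |m|` for `m ≠ 0`. -/
noncomputable def meshKernel (s x : ℝ) : ℝ :=
  Real.Gamma (x - s) / Real.Gamma (x + 1 + s)

lemma inv_le_meshKernel (hs0 : 0 < s) (hs : s < 1 / 2) (hx : s < x) :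
    ((x + s) * x ^ (2 * s))⁻¹ ≤ meshKernel s x := by
  have hx0 : 0 < x := hs0.trans hx
  have hxs : 0 < x - s := sub_pos.2 hx
  have hΓ : 0 < Real.Gamma (x + 1 + s) := Real.Gamma_pos_of_pos (by linarith)
  rw [meshKernel, inv_eq_one_div, div_le_div_iff₀ (by positivity) hΓ, one_mul]
  calc Real.Gamma (x + 1 + s) = (x + s) * Real.Gamma (x - s + 2 * s) := by
        rw [show x + 1 + s = x + s + 1 by ring, Real.Gamma_add_one (by linarith)]
        ring_nf
    _ ≤ (x + s) * ((x - s) ^ (2 * s) * Real.Gamma (x - s)) := by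
        gcongr
        exact Gamma_add_le_rpow_mul_Gamma hxs (by linarith) (by linarith)
    _ ≤ (x + s) * (x ^ (2 * s) * Real.Gamma (x - s)) := by
        gcongr
        linarith
    _ = Real.Gamma (x - s) * ((x + s) * x ^ (2 * s)) := by ring

lemma meshKernel_le_inv (hs0 : 0 < s) (hs : s < 1 / 2) (hx : s < x) :
    meshKernel s x ≤ ((x - s) * x ^ (2 * s))⁻¹ := by
  have hx0 : 0 < x := hs0.trans hx
  have hxs : 0 < x - s := sub_pos.2 hx
  have hΓ : 0 < Real.Gamma (x + 1 + s) := Real.Gamma_pos_of_pos (by linarith)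
  rw [meshKernel, inv_eq_one_div, div_le_div_iff₀ hΓ (by positivity), one_mul]
  calc Real.Gamma (x - s) * ((x - s) * x ^ (2 * s))
      = x ^ (2 * s) * Real.Gamma (x + s + (1 - 2 * s)) := by
        rw [show x + s + (1 - 2 * s) = x - s + 1 by ring, Real.Gamma_add_one hxs.ne']
        ring
    _ ≤ (x + s) ^ (2 * s) * ((x + s) ^ (1 - 2 * s) * Real.Gamma (x + s)) := by
        refine mul_le_mul (Real.rpow_le_rpow hx0.le (by linarith) (by linarith))
          (Gamma_add_le_rpow_mul_Gamma (by linarith) (by linarith) (by linarith))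
          (Real.Gamma_pos_of_pos (by linarith)).le (by positivity)
    _ = (x + s) * Real.Gamma (x + s) := by
        rw [← mul_assoc, ← Real.rpow_add (add_pos hx0 hs0), add_sub_cancel, Real.rpow_one]
    _ = Real.Gamma (x + 1 + s) := by
        rw [← Real.Gamma_add_one (add_pos hx0 hs0).ne']
        ring_nf

lemma abs_meshKernel_sub_rpow_le (hs0 : 0 < s) (hs : s < 1 / 2) (hx : 1 ≤ x) :
    |meshKernel s x - x ^ (-(1 + 2 * s))| ≤ x ^ (-(1 + 2 * s)) / x := by
  have hx0 : 0 < x := by linarith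
  have hxs : 0 < x - s := by linarith
  have hlower := inv_le_meshKernel hs0 hs (x := x) (by linarith)
  have hupper := meshKernel_le_inv hs0 hs (x := x) (by linarith)
  rw [Real.rpow_neg hx0.le, Real.rpow_add hx0, Real.rpow_one]
  set P := x ^ (2 * s)
  have hP : 0 < P := by positivity
  have hright : ((x - s) * P)⁻¹ - (x * P)⁻¹ ≤ (x * P)⁻¹ / x := by
    have : s * x ≤ x - s := by nlinarith
    rw [show ((x - s) * P)⁻¹ - (x * P)⁻¹ = s / ((x - s) * (x * P)) by field_simp; ring,
      show (x * P)⁻¹ / x = 1 / (x * (x * P)) by field_simp,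
      div_le_div_iff₀ (by positivity) (by positivity)]
    calc s * (x * (x * P)) = s * x * (x * P) := by ring
      _ ≤ (x - s) * (x * P) := by gcongr
      _ = _ := by ring
  have hleft : (x * P)⁻¹ - ((x + s) * P)⁻¹ ≤ (x * P)⁻¹ / x := by
    rw [show (x * P)⁻¹ - ((x + s) * P)⁻¹ = s / ((x + s) * (x * P)) by field_simp; ring,
      show (x * P)⁻¹ / x = 1 / (x * (x * P)) by field_simp]
    gcongr <;> linarith
  exact abs_le.2 ⟨by linarith, by linarith⟩

end Gamma

section UnitMesh

variable {α s L : ℝ} {g : ℝ → ℝ}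

lemma abs_mul_meshKernel_sub_div_rpow_le {a b x y : ℝ} (hs0 : 0 < s) (hs : s < 1 / 2)
    (hL : 0 ≤ L) (hx : 1 ≤ x) (hxy : |x - y| ≤ 1 / 2) (ha : |a| ≤ L * x) (hab : |a - b| ≤ L) :
    |a * meshKernel s x - b / y ^ (1 + 2 * s)| ≤
      L * ((1 + (2 + 2 * s) * 2 ^ (1 + 2 * s)) * x ^ (-(1 + 2 * s))) := by
  have hy : 0 < y := by linarith [(abs_le.1 hxy).2]
  have hkernel := abs_meshKernel_sub_rpow_le hs0 hs hx
  have hpow := abs_rpow_neg_sub_rpow_neg_le_of_abs_sub_le_half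
    (p := 1 + 2 * s) (by linarith) hx hxy
  have hpow' := rpow_neg_le_of_abs_sub_le_half (p := 1 + 2 * s) (by linarith) hx hxy
  have hr : 0 ≤ y ^ (-(1 + 2 * s)) := Real.rpow_nonneg hy.le _
  rw [div_eq_mul_inv b, ← Real.rpow_neg hy.le]
  set q := x ^ (-(1 + 2 * s))
  set r := y ^ (-(1 + 2 * s))
  calc |a * meshKernel s x - b * r|
      = |a * (meshKernel s x - q) + a * (q - r) + (a - b) * r| := by ring_nf
    _ ≤ |a| * |meshKernel s x - q| + |a| * |q - r| + |a - b| * r := by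
        refine (abs_add_three _ _ _).trans_eq ?_
        rw [abs_mul, abs_mul, abs_mul, abs_of_nonneg hr]
    _ ≤ L * x * (q / x) + L * x * ((1 + 2 * s) * 2 ^ (1 + 2 * s) * (q / x)) +
          L * (2 ^ (1 + 2 * s) * q) := by gcongr
    _ = L * ((1 + (2 + 2 * s) * 2 ^ (1 + 2 * s)) * q) := by
        field_simp
        ring

/-- The unit cell `(m - 1/2, m + 1/2]` around the lattice point `m`; these cells tile `ℝ`. -/
def gridCell (m : ℤ) : Set ℝ :=
  Ioc (-1 / 2 + m) (-1 / 2 + m + 1)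

lemma abs_sub_le_half_of_mem_gridCell {m : ℤ} {t : ℝ} (ht : t ∈ gridCell m) :
    |m - t| ≤ 1 / 2 :=
  abs_le.2 ⟨by linarith [ht.2], by linarith [ht.1]⟩

lemma volume_real_gridCell (m : ℤ) : volume.real (gridCell m) = 1 := by
  rw [gridCell, Real.volume_real_Ioc_of_le (by linarith), add_sub_cancel_left]

lemma integrableOn_gridCell_abs_rpow {r : ℝ} (hr : -1 < r) (m : ℤ) :
    IntegrableOn (fun t : ℝ ↦ |t| ^ r) (gridCell m) :=
  ((locallyIntegrable_abs_rpow hr).integrableOn_isCompact isCompact_Icc).mono_set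
    Ioc_subset_Icc_self

/-- A bound, per unit of `α`-Hölder seminorm, for the error made on the cell around `m` when
`∫ g t / |t| ^ (1 + 2 * s)` is replaced by `g m * meshKernel s |m|`. At `m = 0` the discrete term
vanishes and the bound is the integral of the singularity. -/
noncomputable def cellErrorBound (α s : ℝ) : ℤ → ℝ :=
  Function.update (fun m ↦ (1 + (2 + 2 * s) * 2 ^ (1 + 2 * s)) * |(m : ℝ)| ^ (-(1 + 2 * s)))
    0 (∫ t in gridCell 0, |t| ^ (α - (1 + 2 * s)))

lemma summable_cellErrorBound (α : ℝ) (hs0 : 0 < s) : Summable (cellErrorBound α s) :=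
  ((Real.summable_abs_int_rpow (by linarith)).mul_left _).update _ _

lemma cellErrorBound_nonneg (α : ℝ) (hs0 : 0 < s) (m : ℤ) : 0 ≤ cellErrorBound α s m := by
  rcases eq_or_ne m 0 with rfl | hm
  · rw [cellErrorBound, Function.update_self]
    positivity
  · rw [cellErrorBound, Function.update_of_ne hm]
    positivity

lemma abs_setIntegral_gridCell_zero_le (hL : 0 ≤ L) (hs0 : 0 < s) (h2s : 2 * s < α)
    (hg : ∀ t, |g t| ≤ L * |t| ^ α) :
    |∫ t in gridCell 0, g t / |t| ^ (1 + 2 * s)| ≤ L * cellErrorBound α s 0 := by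
  have hdom := (integrableOn_gridCell_abs_rpow (r := α - (1 + 2 * s)) (by linarith) 0).const_mul L
  rw [cellErrorBound, Function.update_self, ← integral_const_mul]
  have hbound (t : ℝ) : ‖g t / |t| ^ (1 + 2 * s)‖ ≤ L * |t| ^ (α - (1 + 2 * s)) :=
    abs_div_abs_rpow_le hL (by linarith) (hg t)
  exact norm_integral_le_of_norm_le hdom (ae_of_all _ hbound)

lemma abs_mul_meshKernel_sub_setIntegral_gridCell_le (hα0 : 0 ≤ α) (hα1 : α ≤ 1) (hs0 : 0 < s)
    (hs : s < 1 / 2) (hL : 0 ≤ L) (hg0 : g 0 = 0) (hg : ∀ x y, |g x - g y| ≤ L * |x - y| ^ α)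
    (hint : Integrable fun t ↦ g t / |t| ^ (1 + 2 * s)) {m : ℤ} (hm : m ≠ 0) :
    |g m * meshKernel s |(m : ℝ)| - ∫ t in gridCell m, g t / |t| ^ (1 + 2 * s)| ≤
      L * cellErrorBound α s m := by
  have hm1 : 1 ≤ |(m : ℝ)| := by exact_mod_cast Int.one_le_abs hm
  have hgm : |g m| ≤ L * |(m : ℝ)| := by
    calc |g m| ≤ L * |(m : ℝ)| ^ α := by simpa [hg0] using hg m 0
      _ ≤ L * |(m : ℝ)| := by
        gcongr
        exact Real.rpow_le_self_of_one_le hm1 hα1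
  have hpointwise : ∀ t ∈ gridCell m,
      ‖g m * meshKernel s |(m : ℝ)| - g t / |t| ^ (1 + 2 * s)‖ ≤ L * cellErrorBound α s m := by
    intro t ht
    have hmt := abs_sub_le_half_of_mem_gridCell ht
    have hgt : |g m - g t| ≤ L := (hg m t).trans <|
      mul_le_of_le_one_right hL (Real.rpow_le_one (abs_nonneg _) (by linarith) hα0)
    rw [cellErrorBound, Function.update_of_ne hm]
    exact abs_mul_meshKernel_sub_div_rpow_le hs0 hs hL hm1
      ((abs_abs_sub_abs_le_abs_sub _ _).trans hmt) hgm hgt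
  have hbound := norm_setIntegral_le_of_norm_le_const (μ := volume)
    (by simp [gridCell] : volume (gridCell m) < ⊤) hpointwise
  have hconst : IntegrableOn (fun _ : ℝ ↦ g m * meshKernel s |(m : ℝ)|) (gridCell m) :=
    integrableOn_const (by simp [gridCell])
  rw [integral_sub hconst hint.integrableOn, setIntegral_const, volume_real_gridCell, one_smul,
    mul_one] at hbound
  exact hbound

lemma abs_tsum_mul_meshKernel_sub_integral_le (hα1 : α ≤ 1) (hs0 : 0 < s) (h2s : 2 * s < α)
    (hg0 : g 0 = 0) (hg : ∀ x y, |g x - g y| ≤ L * |x - y| ^ α)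
    (hint : Integrable fun t ↦ g t / |t| ^ (1 + 2 * s)) :
    |∑' m : ℤ, g m * meshKernel s |(m : ℝ)| - ∫ t, g t / |t| ^ (1 + 2 * s)| ≤
      L * ∑' m, cellErrorBound α s m := by
  have hL : 0 ≤ L := by simpa using (abs_nonneg _).trans (hg 1 0)
  rw [← tsum_mul_left]
  refine norm_tsum_sub_integral_le (S := gridCell) (fun m ↦ measurableSet_Ioc)
    (pairwise_disjoint_Ioc_add_intCast _) (iUnion_Ioc_add_intCast _) hint
    ((summable_cellErrorBound α hs0).mul_left L) fun m ↦ ?_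
  rcases eq_or_ne m 0 with rfl | hm
  · simpa [hg0] using abs_setIntegral_gridCell_zero_le hL hs0 h2s
      (fun t ↦ by simpa [hg0] using hg t 0)
  · exact abs_mul_meshKernel_sub_setIntegral_gridCell_le (by linarith) hα1 hs0 (by linarith) hL
      hg0 hg hint hm

end UnitMesh

section Mesh

variable {s h : ℝ}

lemma As_pos (hs0 : 0 < s) (hs1 : s < 1) : 0 < As s := by
  have := sub_pos.2 hs1
  unfold As
  positivity

lemma Ksh_of_ne_zero (s : ℝ) (hh : 0 ≤ h) {m : ℤ} (hm : m ≠ 0) :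
    Ksh h s m = As s * h ^ (-(2 * s)) * meshKernel s |(m : ℝ)| := by
  rw [Ksh, if_neg hm, meshKernel, Real.rpow_neg hh]
  field_simp

lemma fracLap_eq_tsum_meshKernel (s : ℝ) (hh : 0 ≤ h) (u : ℤ → ℝ) (j : ℤ) :
    fracLap h s u j =
      As s * h ^ (-(2 * s)) * ∑' m : ℤ, (u j - u (j + m)) * meshKernel s |(m : ℝ)| := by
  rw [fracLap, ← (Equiv.addLeft j).tsum_eq, ← tsum_mul_left]
  refine tsum_congr fun m ↦ ?_
  rcases eq_or_ne m 0 with rfl | hm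
  · simp
  · rw [Equiv.coe_addLeft, sub_add_cancel_left, Ksh_of_ne_zero s hh (neg_ne_zero.2 hm),
      Int.cast_neg, abs_neg]
    ring

lemma sub_div_abs_rpow_comp_affine (hh : 0 < h) (p : ℝ) (U : ℝ → ℝ) (x t : ℝ) :
    (U x - U (x + h * t)) / |x - (x + h * t)| ^ p =
      h ^ (-p) * ((U x - U (x + h * t)) / |t| ^ p) := by
  rw [sub_add_cancel_left, abs_neg, abs_mul, abs_of_pos hh, Real.mul_rpow hh.le (abs_nonneg t),
    Real.rpow_neg hh.le]
  field_simp

lemma cFracLap_eq_integral_affine (hh : 0 < h) (s : ℝ) (U : ℝ → ℝ) (x : ℝ) :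
    cFracLap s U x =
      As s * h ^ (-(2 * s)) * ∫ t, (U x - U (x + h * t)) / |t| ^ (1 + 2 * s) := by
  set F : ℝ → ℝ := fun y ↦ (U x - U y) / |x - y| ^ (1 + 2 * s)
  have hF : ∫ y, F y = h * ∫ t, F (x + h * t) := by
    rw [Measure.integral_comp_mul_left (fun y ↦ F (x + y)), integral_add_left_eq_self F,
      abs_of_pos (inv_pos.2 hh), smul_eq_mul, mul_inv_cancel_left₀ hh.ne']
  have hpow : h ^ (-(2 * s)) = h * h ^ (-(1 + 2 * s)) := by
    rw [neg_add, Real.rpow_add hh, Real.rpow_neg_one, mul_inv_cancel_left₀ hh.ne']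
  rw [cFracLap, hF]
  simp only [F, sub_div_abs_rpow_comp_affine hh]
  rw [integral_const_mul, hpow]
  ring

lemma integrable_comp_affine {p x : ℝ} {U : ℝ → ℝ} (hh : 0 < h)
    (hU : Integrable fun y ↦ (U x - U y) / |x - y| ^ p) :
    Integrable fun t ↦ (U x - U (x + h * t)) / |t| ^ p := by
  refine (((hU.comp_add_left x).comp_mul_left' hh.ne').const_mul (h ^ p)).congr
    (ae_of_all _ fun t ↦ ?_)
  dsimp only
  rw [sub_div_abs_rpow_comp_affine hh, ← mul_assoc, ← Real.rpow_add hh, add_neg_cancel,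
    Real.rpow_zero, one_mul]

lemma abs_sub_comp_affine_le {α L : ℝ} {U : ℝ → ℝ} (hh : 0 ≤ h)
    (hU : ∀ x y, |U x - U y| ≤ L * |x - y| ^ α) (x a b : ℝ) :
    |(U x - U (x + h * a)) - (U x - U (x + h * b))| ≤ L * h ^ α * |a - b| ^ α := by
  calc |(U x - U (x + h * a)) - (U x - U (x + h * b))| = |U (x + h * b) - U (x + h * a)| := by
        rw [sub_sub_sub_cancel_left]
    _ ≤ L * |x + h * b - (x + h * a)| ^ α := hU _ _
    _ = L * h ^ α * |a - b| ^ α := by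
        rw [add_sub_add_left_eq_sub, ← mul_sub, abs_mul, abs_of_nonneg hh, abs_sub_comm b a,
          Real.mul_rpow hh (abs_nonneg _), mul_assoc]

lemma integrable_sub_div_abs_rpow {α L M : ℝ} {U : ℝ → ℝ} (hs0 : 0 < s) (h2s : 2 * s < α)
    (hM : ∀ x, |U x| ≤ M) (hU : ∀ x y, |U x - U y| ≤ L * |x - y| ^ α) (x : ℝ) :
    Integrable fun y ↦ (U x - U y) / |x - y| ^ (1 + 2 * s) := by
  have hL : 0 ≤ L := by simpa using (abs_nonneg _).trans (hU 1 0)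
  have hα : 0 < α := by linarith
  have hcont : Continuous U :=
    (holderWith_of_dist_le (C := ⟨L, hL⟩) (r := ⟨α, hα.le⟩) hU).continuous hα
  have hint := integrable_div_abs_rpow (g := fun t ↦ U x - U (x - t)) (L := L) (M := M + M)
    (by fun_prop) (p := 1 + 2 * s) (α := α) (by linarith) (by linarith)
    (fun t ↦ by simpa using hU x (x - t))
    (fun t ↦ (abs_sub _ _).trans (add_le_add (hM _) (hM _)))
  simpa using hint.comp_sub_left x

end Mesh

theorem uniform_comparison_Holder_general (α s : ℝ) (hα1 : α ≤ 1) (hs0 : 0 < s)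
    (h2s : 2 * s < α) :
    ∃ C : ℝ, 0 < C ∧ ∀ h : ℝ, 0 < h → ∀ U : ℝ → ℝ, ∀ L : ℝ,
      (∀ x y : ℝ, |U x - U y| ≤ L * |x - y| ^ α) →
      ∀ j : ℤ, Integrable (fun y ↦ (U (h * j) - U y) / |h * j - y| ^ (1 + 2 * s)) →
        |fracLap h s (fun m : ℤ => U (h * m)) j - cFracLap s U (h * j)| ≤
          C * L * h ^ (α - 2 * s) := by
  have hA : 0 < As s := As_pos hs0 (by linarith)
  have hB : 0 ≤ ∑' m, cellErrorBound α s m := tsum_nonneg (cellErrorBound_nonneg α hs0)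
  refine ⟨As s * (∑' m, cellErrorBound α s m + 1), by positivity, fun h hh U L hU j hint ↦ ?_⟩
  have hL : 0 ≤ L := by simpa using (abs_nonneg _).trans (hU 1 0)
  have hunit := abs_tsum_mul_meshKernel_sub_integral_le hα1 hs0 h2s
    (g := fun t ↦ U (h * j) - U (h * j + h * t)) (by simp)
    (abs_sub_comp_affine_le hh.le hU (h * j)) (integrable_comp_affine hh hint)
  have hK : 0 ≤ As s * h ^ (-(2 * s)) := by positivity
  rw [fracLap_eq_tsum_meshKernel s hh.le, cFracLap_eq_integral_affine hh, ← mul_sub, abs_mul,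
    abs_of_nonneg hK, sub_eq_neg_add α, Real.rpow_add hh]
  simp only [Int.cast_add, mul_add (h : ℝ)]
  calc _ ≤ As s * h ^ (-(2 * s)) * (L * h ^ α * ∑' m, cellErrorBound α s m) := by gcongr
    _ ≤ As s * h ^ (-(2 * s)) * (L * h ^ α * (∑' m, cellErrorBound α s m + 1)) := by
      gcongr
      exact le_add_of_nonneg_right zero_le_one
    _ = _ := by ring

/-- Uniform comparison of the fractional discrete Laplacian with the fractional Laplacian,
for bounded `α`-Hölder functions with `2s < α`. -/
theorem uniform_comparison_Holder (α s : ℝ) (hα0 : 0 < α) (hα1 : α ≤ 1)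
    (hs0 : 0 < s) (hs1 : s < 1) (h2s : 2 * s < α) :
    ∃ C : ℝ, 0 < C ∧ ∀ h : ℝ, 0 < h → ∀ U : ℝ → ℝ, ∀ M L : ℝ, 0 ≤ L →
      (∀ x : ℝ, |U x| ≤ M) →
      (∀ x y : ℝ, |U x - U y| ≤ L * |x - y| ^ α) →
      ∀ j : ℤ,
        |fracLap h s (fun m : ℤ => U (h * m)) j - cFracLap s U (h * j)| ≤
          C * L * h ^ (α - 2 * s) := by
  obtain ⟨C, hC, hbound⟩ := uniform_comparison_Holder_general α s hα1 hs0 h2s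
  exact ⟨C, hC, fun h hh U M L _ hM hU j ↦
    hbound h hh U L hU j (integrable_sub_div_abs_rpow hs0 h2s hM hU (h * j))⟩
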